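/- arXiv:1605.03046 — 4 statements merged into one kernel-verified Lean document; each statement's English description precedes it below -/
import Mathlib

section
/- Fix positive reals p₋₁, p₀, p₁, let P(u) = p₋₁u⁻¹ + p₀ + p₁u, τ = √(p₋₁/p₁), ρ = 1/P(τ) = 1/(p₀ + 2√(p₋₁p₁)), and C = √(2P(τ)/P″(τ)) where P″(τ) = 2p₋₁/τ³. For 0 < z < ρ the discriminant (1−p₀z)² − 4p₋₁p₁z² is positive; define the small branch u₁(z) = (1 − p₀z − √((1−p₀z)² − 4p₋₁p₁z²))/(2p₁z). Then u₁(z) = τ − C√(1 − z/ρ) + O(1 − z/ρ) as z → ρ⁻; explicitly, there exist M > 0 and η > 0 such that for all real z with ρ − η < z < ρ one has |u₁(z) − τ + C·√(1 − z/ρ)| ≤ M(1 − z/ρ). -/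
/-- The discriminant factors with the dominant singularity `1 / (p0 + 2ab)` as a root. -/
theorem discriminant_factorization (a b p0 z : ℝ) :
    (1 - p0 * z) ^ 2 - 4 * a ^ 2 * b ^ 2 * z ^ 2 =
      (1 - (p0 + 2 * a * b) * z) * (1 - (p0 + 2 * a * b) * z + 4 * a * b * z) := by
  ring

/-- Exact remainder of the small branch at the square-root singularity. -/
theorem small_branch_sub_eq {a b p0 z : ℝ} (hb : 0 < b) (hz : 0 < z)
    (hw : 0 ≤ 1 - (p0 + 2 * a * b) * z) (C : ℝ) :
    (1 - p0 * z - √((1 - p0 * z) ^ 2 - 4 * a ^ 2 * b ^ 2 * z ^ 2)) / (2 * b ^ 2 * z) - a / b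
        + C * √(1 - (p0 + 2 * a * b) * z) =
      (1 - (p0 + 2 * a * b) * z) / (2 * b ^ 2 * z) + √(1 - (p0 + 2 * a * b) * z) *
        (C - √(1 - (p0 + 2 * a * b) * z + 4 * a * b * z) / (2 * b ^ 2 * z)) := by
  rw [discriminant_factorization, Real.sqrt_mul hw]
  field_simp
  ring

/-- If `C > 0`, `R ≥ 0` and `C² ≤ R² ≤ C² + e`, then `|C - R| ≤ e / C`. -/
theorem abs_sub_le_div_of_sq_le {C R e : ℝ} (hC : 0 < C) (hR : 0 ≤ R)
    (hle : C ^ 2 ≤ R ^ 2) (he : R ^ 2 ≤ C ^ 2 + e) : |C - R| ≤ e / C := by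
  have hCR : C ≤ R := by nlinarith
  rw [abs_sub_comm, abs_of_nonneg (sub_nonneg.2 hCR), le_div_iff₀ hC]
  nlinarith

/-- The error bound for the small branch, uniform on `[ρ / 2, ρ]`, where `ρ = 1 / (p0 + 2ab)`. -/
theorem abs_small_branch_sub_le {a b p0 z C : ℝ} (ha : 0 < a) (hb : 0 < b) (hp0 : 0 < p0)
    (hC : 0 < C) (hC2 : C ^ 2 = (p0 + 2 * a * b) * a / b ^ 3)
    (hz : 1 ≤ 2 * (p0 + 2 * a * b) * z) (hzρ : (p0 + 2 * a * b) * z ≤ 1) :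
    |(1 - p0 * z - √((1 - p0 * z) ^ 2 - 4 * a ^ 2 * b ^ 2 * z ^ 2)) / (2 * b ^ 2 * z) - a / b
        + C * √(1 - (p0 + 2 * a * b) * z)| ≤
      ((p0 + 2 * a * b) / b ^ 2 + ((p0 + 2 * a * b) ^ 2 / b ^ 4
        + 2 * (p0 + 2 * a * b) * a / b ^ 3) / C) * (1 - (p0 + 2 * a * b) * z) := by
  have hab : 0 < a * b := mul_pos ha hb
  have hQ : 0 < p0 + 2 * a * b := by positivity
  have hz0 : 0 < z := by
    by_contra! h
    nlinarith [mul_nonneg hQ.le (neg_nonneg.2 h)]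
  rw [small_branch_sub_eq hb hz0 (sub_nonneg.2 hzρ)]
  set Q := p0 + 2 * a * b
  set w := 1 - Q * z with hw
  have hw0 : 0 ≤ w := sub_nonneg.2 hzρ
  have hinv : 1 / z ≤ 2 * Q := by rwa [div_le_iff₀ hz0]
  have hinv0 : 0 < 1 / z := by positivity
  have hs1 : √w ≤ 1 := Real.sqrt_le_one.2 (by nlinarith)
  have hR2 : (√(w + 4 * a * b * z) / (2 * b ^ 2 * z)) ^ 2 =
      C ^ 2 + w * ((1 / z) ^ 2 / (4 * b ^ 4) + a / b ^ 3 * (1 / z)) := by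
    rw [div_pow, Real.sq_sqrt (by positivity), hC2, hw]
    field_simp
    ring
  have hbound : (1 / z) ^ 2 / (4 * b ^ 4) + a / b ^ 3 * (1 / z) ≤
      Q ^ 2 / b ^ 4 + 2 * Q * a / b ^ 3 := by
    calc (1 / z) ^ 2 / (4 * b ^ 4) + a / b ^ 3 * (1 / z)
        ≤ (2 * Q) ^ 2 / (4 * b ^ 4) + a / b ^ 3 * (2 * Q) := by gcongr
      _ = Q ^ 2 / b ^ 4 + 2 * Q * a / b ^ 3 := by field_simp; ring
  have hdiff : |C - √(w + 4 * a * b * z) / (2 * b ^ 2 * z)| ≤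
      w * (Q ^ 2 / b ^ 4 + 2 * Q * a / b ^ 3) / C := by
    refine abs_sub_le_div_of_sq_le hC (by positivity) ?_ ?_
    · rw [hR2]
      exact le_add_of_nonneg_right (by positivity)
    · rw [hR2]
      gcongr
  have hfirst : w / (2 * b ^ 2 * z) ≤ Q / b ^ 2 * w := by
    calc w / (2 * b ^ 2 * z) = w / (2 * b ^ 2) * (1 / z) := by field_simp
      _ ≤ w / (2 * b ^ 2) * (2 * Q) := by gcongr
      _ = Q / b ^ 2 * w := by field_simp
  calc _ ≤ |w / (2 * b ^ 2 * z)| + |√w * (C - √(w + 4 * a * b * z) / (2 * b ^ 2 * z))| :=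
        abs_add_le _ _
    _ = w / (2 * b ^ 2 * z) + √w * |C - √(w + 4 * a * b * z) / (2 * b ^ 2 * z)| := by
        rw [abs_mul, abs_of_nonneg (Real.sqrt_nonneg w), abs_of_nonneg (by positivity)]
    _ ≤ Q / b ^ 2 * w + 1 * (w * (Q ^ 2 / b ^ 4 + 2 * Q * a / b ^ 3) / C) := by gcongr
    _ = _ := by ring

/-- **Singular expansion of the small branch** `u₁(z) = τ - C√(1-z/ρ) + O(1-z/ρ)`
as `z → ρ⁻`, for Motzkin paths. -/
theorem small_branch_expansion (pm p0 p1 : ℝ) (hpm : 0 < pm) (hp0 : 0 < p0) (hp1 : 0 < p1) :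
    let τ : ℝ := Real.sqrt (pm / p1)
    let Pτ : ℝ := pm * τ⁻¹ + p0 + p1 * τ
    let ρ : ℝ := 1 / (p0 + 2 * Real.sqrt (pm * p1))
    let C : ℝ := Real.sqrt (2 * Pτ / (2 * pm / τ ^ 3))
    let u₁ : ℝ → ℝ := fun z =>
      (1 - p0 * z - Real.sqrt ((1 - p0 * z) ^ 2 - 4 * pm * p1 * z ^ 2)) / (2 * p1 * z)
    (∀ z : ℝ, 0 < z → z < ρ → 0 < (1 - p0 * z) ^ 2 - 4 * pm * p1 * z ^ 2) ∧
    ∃ M : ℝ, 0 < M ∧ ∃ η : ℝ, 0 < η ∧ ∀ z : ℝ, ρ - η < z → z < ρ →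
      |u₁ z - τ + C * Real.sqrt (1 - z / ρ)| ≤ M * (1 - z / ρ) := by
  intro τ Pτ ρ C u₁
  obtain ⟨a, ha, rfl⟩ : ∃ a : ℝ, 0 < a ∧ a ^ 2 = pm :=
    ⟨√pm, Real.sqrt_pos.2 hpm, Real.sq_sqrt hpm.le⟩
  obtain ⟨b, hb, rfl⟩ : ∃ b : ℝ, 0 < b ∧ b ^ 2 = p1 :=
    ⟨√p1, Real.sqrt_pos.2 hp1, Real.sq_sqrt hp1.le⟩
  have hQ : 0 < p0 + 2 * a * b := by positivity
  have hτ : τ = a / b := by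
    simp only [τ]
    rw [← div_pow, Real.sqrt_sq (by positivity)]
  have hρ : ρ = 1 / (p0 + 2 * a * b) := by
    simp only [ρ]
    rw [← mul_pow, Real.sqrt_sq (by positivity), mul_assoc]
  have hCarg : 2 * Pτ / (2 * a ^ 2 / τ ^ 3) = (p0 + 2 * a * b) * a / b ^ 3 := by
    simp only [Pτ]
    rw [hτ]
    field_simp
    ring
  have hC : 0 < C := by
    simp only [C]
    rw [hCarg]
    positivity
  have hC2 : C ^ 2 = (p0 + 2 * a * b) * a / b ^ 3 := by
    simp only [C]
    rw [hCarg, Real.sq_sqrt (by positivity)]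
  have hdiv (z : ℝ) : z / ρ = (p0 + 2 * a * b) * z := by
    rw [hρ]
    field_simp
  have hlt {z : ℝ} (hz : z < ρ) : (p0 + 2 * a * b) * z < 1 := by
    rwa [hρ, lt_div_iff₀ hQ, mul_comm] at hz
  refine ⟨fun z hz hzρ => ?_, (p0 + 2 * a * b) / b ^ 2 + ((p0 + 2 * a * b) ^ 2 / b ^ 4
    + 2 * (p0 + 2 * a * b) * a / b ^ 3) / C, by positivity, ρ / 2, ?_, fun z hz hzρ => ?_⟩
  · rw [discriminant_factorization]
    have hw := sub_pos.2 (hlt hzρ)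
    positivity
  · rw [hρ]
    positivity
  · have hz2 : 1 ≤ 2 * (p0 + 2 * a * b) * z := by
      have h : 1 / (p0 + 2 * a * b) < 2 * z := by
        rw [← hρ]
        linarith
      rw [div_lt_iff₀ hQ] at h
      linarith
    rw [hdiv, hτ]
    exact abs_small_branch_sub_le ha hb hp0 hC hC2 hz2 (hlt hzρ).le
end

section
/- Fix positive reals p₋₁, p₀, p₁, let P(u) = p₋₁u⁻¹ + p₀ + p₁u, τ = √(p₋₁/p₁), ρ = 1/(p₀ + 2√(p₋₁p₁)), and C = √(2P(τ)/P″(τ)) where P″(τ) = 2p₋₁/τ³. Define for complex z the small branch u₁(z) = (1 − p₀z − √((1−p₀z)² − 4p₋₁p₁z²))/(2p₁z) using principal branches. Then there exist an open neighborhood U ⊆ ℂ of ρ and functions a, b analytic on U such that a(ρ) = τ, b(ρ) = −C, and u₁(z) = a(z) + b(z)·√(1 − z/ρ) for every z ∈ U not lying on the real ray [ρ, ∞). -/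
/-- The arguments of `w` and `g` add up without leaving `(-π, π]` when `g` lies in the right
half-plane, `w` lies in the slit plane, and `w * g` lies on the same side of the real axis
as `w`. -/
theorem Complex.arg_add_arg_mem_Ioc_of_im_mul {w g : ℂ} {k : ℝ} (hw : w ∈ Complex.slitPlane)
    (hg : 0 < g.re) (hk : 0 < k) (him : (w * g).im = k * w.im) :
    w.arg + g.arg ∈ Set.Ioc (-Real.pi) Real.pi := by
  have hpi := Real.pi_pos
  obtain ⟨hg₁, hg₂⟩ := abs_lt.1 (Complex.abs_arg_lt_pi_div_two_iff.2 (Or.inl hg))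
  have hsin : ‖w‖ * ‖g‖ * Real.sin (w.arg + g.arg) = k * w.im := by
    rw [← him, Real.sin_add, Complex.mul_im]
    linear_combination (‖g‖ * Real.cos g.arg) * Complex.norm_mul_sin_arg w
      + w.im * Complex.norm_mul_cos_arg g + (‖g‖ * Real.sin g.arg) * Complex.norm_mul_cos_arg w
      + w.re * Complex.norm_mul_sin_arg g
  have hnorm : 0 ≤ ‖w‖ * ‖g‖ := by positivity
  have hw₁ := Complex.neg_pi_lt_arg w
  have hw₂ := Complex.arg_le_pi w
  rcases lt_trichotomy w.im 0 with h | h | h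
  · have harg : w.arg < 0 := Complex.arg_neg_iff.2 h
    refine ⟨?_, by linarith⟩
    by_contra! hle
    have hpos : 0 ≤ Real.sin (w.arg + g.arg) := by
      rw [← Real.sin_add_two_pi]
      exact Real.sin_nonneg_of_nonneg_of_le_pi (by linarith) (by linarith)
    nlinarith [mul_nonneg hnorm hpos, mul_pos hk (neg_pos.2 h)]
  · have hre : 0 < w.re := by
      rcases Complex.mem_slitPlane_iff.1 hw with h' | h'
      · exact h'
      · exact absurd h h'
    have harg : w.arg = 0 := Complex.arg_eq_zero_iff.2 ⟨hre.le, h⟩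
    rw [harg]
    constructor <;> linarith
  · have harg : 0 ≤ w.arg := Complex.arg_nonneg_iff.2 h.le
    refine ⟨by linarith, ?_⟩
    by_contra! hlt
    have hneg : Real.sin (w.arg + g.arg) ≤ 0 := by
      rw [← Real.sin_sub_two_pi]
      exact Real.sin_nonpos_of_nonpos_of_neg_pi_le (by linarith) (by linarith)
    nlinarith [mul_nonneg hnorm (neg_nonneg.2 hneg), mul_pos hk h]

/-- **Square-root singularity of the small branch** (Proposition: local representation
`u₁(z) = a(z) + b(z)√(1-z/ρ)` near `ρ` with `a(ρ) = τ`, `b(ρ) = -C`). -/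
theorem small_branch_decomposition (pm p0 p1 : ℝ)
    (hpm : 0 < pm) (hp0 : 0 < p0) (hp1 : 0 < p1) :
    let τ : ℝ := Real.sqrt (pm / p1)
    let Pτ : ℝ := pm * τ⁻¹ + p0 + p1 * τ
    let ρ : ℝ := 1 / (p0 + 2 * Real.sqrt (pm * p1))
    let C : ℝ := Real.sqrt (2 * Pτ / (2 * pm / τ ^ 3))
    let u₁ : ℂ → ℂ := fun z =>
      (1 - (p0 : ℂ) * z -
        ((1 - (p0 : ℂ) * z) ^ 2 - 4 * (pm : ℂ) * (p1 : ℂ) * z ^ 2) ^ (1/2 : ℂ)) /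
      (2 * (p1 : ℂ) * z)
    ∃ U : Set ℂ, IsOpen U ∧ (ρ : ℂ) ∈ U ∧
      ∃ a b : ℂ → ℂ, AnalyticOnNhd ℂ a U ∧ AnalyticOnNhd ℂ b U ∧
        a ρ = (τ : ℂ) ∧ b ρ = (-C : ℝ) ∧
        ∀ z ∈ U, (¬ ∃ t : ℝ, ρ ≤ t ∧ z = (t : ℂ)) →
          u₁ z = a z + b z * (1 - z / (ρ : ℂ)) ^ (1/2 : ℂ) := by
  intro τ Pτ ρ C u₁
  have hτ : 0 < τ := Real.sqrt_pos.2 (div_pos hpm hp1)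
  have hpmτ : pm = p1 * τ ^ 2 := by
    rw [Real.sq_sqrt (div_pos hpm hp1).le]
    field_simp
  have hs : Real.sqrt (pm * p1) = p1 * τ := by
    rw [hpmτ, show p1 * τ ^ 2 * p1 = (p1 * τ) ^ 2 by ring, Real.sqrt_sq (by positivity)]
  have hρ_eq : ρ = 1 / (p0 + 2 * (p1 * τ)) := by rw [← hs]
  have hρ : 0 < ρ := by rw [hρ_eq]; positivity
  have hρ_mul : ρ * (p0 + 2 * (p1 * τ)) = 1 := by rw [hρ_eq]; field_simp
  have hρC : (ρ : ℂ) ≠ 0 := by exact_mod_cast hρ.ne'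
  have hp1C : (p1 : ℂ) ≠ 0 := by exact_mod_cast hp1.ne'
  have hρ_mulC : (ρ : ℂ) * (p0 + 2 * (p1 * τ)) = 1 := by exact_mod_cast hρ_mul
  have hpmC : (pm : ℂ) = p1 * τ ^ 2 := by exact_mod_cast hpmτ
  have hC : C = Real.sqrt (4 * (p1 * τ) * ρ) / (2 * p1 * ρ) := by
    have hPτ : Pτ = 1 / ρ := by
      have : Pτ = p0 + 2 * (p1 * τ) := by
        simp only [Pτ]
        rw [hpmτ]
        field_simp
        ring
      rw [this, hρ_eq, one_div_one_div]
    have hquot : 2 * Pτ / (2 * pm / τ ^ 3) = 4 * (p1 * τ) * ρ / (2 * p1 * ρ) ^ 2 := by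
      rw [hPτ, hpmτ]
      field_simp
      ring
    simp only [C]
    rw [hquot, Real.sqrt_div (by positivity), Real.sqrt_sq (by positivity)]
  let g : ℂ → ℂ := fun z => 1 - ((p0 - 2 * (p1 * τ) : ℝ) : ℂ) * z
  have hgρ : g ρ = ((4 * (p1 * τ) * ρ : ℝ) : ℂ) := by
    simp only [g]
    push_cast
    linear_combination -hρ_mulC
  have hg_diff : Differentiable ℂ g := by fun_prop
  have hfactor (z : ℂ) : (1 - (p0 : ℂ) * z) ^ 2 - 4 * (pm : ℂ) * (p1 : ℂ) * z ^ 2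
      = (1 - z / ρ) * g z := by
    have : z / ρ = (p0 + 2 * (p1 * τ)) * z := by
      rw [div_eq_iff hρC]
      linear_combination -z * hρ_mulC
    rw [this, hpmC]
    simp only [g]
    push_cast
    ring
  let k : ℂ → ℝ := fun z =>
    4 * (p1 * τ) * ρ + 2 * ((p0 - 2 * (p1 * τ)) * ρ) * (1 - z / (ρ : ℂ)).re
  have hk_cont : Continuous k :=
    continuous_const.add (continuous_const.mul (Complex.continuous_re.comp
      (continuous_const.sub (continuous_id.div_const _))))
  have him (z : ℂ) : ((1 - z / ρ) * g z).im = k z * (1 - z / (ρ : ℂ)).im := by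
    obtain ⟨w, rfl⟩ : ∃ w : ℂ, z = ρ * (1 - w) := ⟨1 - z / ρ, by field_simp; ring⟩
    have hw : 1 - (ρ : ℂ) * (1 - w) / ρ = w := by field_simp; ring
    simp only [k, g, hw]
    simp only [Complex.mul_im, Complex.mul_re, Complex.sub_im, Complex.sub_re, Complex.one_re,
      Complex.one_im, Complex.ofReal_re, Complex.ofReal_im]
    linear_combination (-w.im) * hρ_mul
  refine ⟨{z | z ≠ 0 ∧ 0 < (g z).re ∧ 0 < k z}, ?_, ?_,
    fun z => (1 - p0 * z) / (2 * p1 * z), fun z => -(g z) ^ (1 / 2 : ℂ) / (2 * p1 * z),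
    ?_, ?_, ?_, ?_, ?_⟩
  · refine isOpen_ne.inter (IsOpen.inter ?_ ?_)
    · exact isOpen_lt continuous_const (Complex.continuous_re.comp hg_diff.continuous)
    · exact isOpen_lt continuous_const hk_cont
  · refine ⟨hρC, ?_, ?_⟩
    · rw [hgρ, Complex.ofReal_re]
      positivity
    · simp only [k, div_self hρC, sub_self, Complex.zero_re, mul_zero, add_zero]
      positivity
  · rintro z ⟨hz, -, -⟩
    have hden : 2 * (p1 : ℂ) * z ≠ 0 := by simp [hz, hp1C]
    fun_prop (disch := assumption)
  · rintro z ⟨hz, hgz, -⟩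
    have hden : 2 * (p1 : ℂ) * z ≠ 0 := by simp [hz, hp1C]
    exact ((hg_diff.analyticAt z).cpow analyticAt_const (Or.inl hgz)).neg.div (by fun_prop) hden
  · simp only
    rw [div_eq_iff (by simp [hρC, hp1C])]
    linear_combination -hρ_mulC
  · simp only
    have hroot : (g ρ) ^ (1 / 2 : ℂ) = (Real.sqrt (4 * (p1 * τ) * ρ) : ℂ) := by
      have hnonneg : 0 ≤ 4 * (p1 * τ) * ρ := by positivity
      rw [hgρ, Real.sqrt_eq_rpow, Complex.ofReal_cpow hnonneg]
      norm_num
    rw [hroot, hC]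
    push_cast
    rw [neg_div]
  · rintro z ⟨hz, hgz, hkz⟩ hray
    have hw : 1 - z / (ρ : ℂ) ∈ Complex.slitPlane := by
      rw [Complex.mem_slitPlane_iff]
      by_contra! hcon
      obtain ⟨hre, him0⟩ := hcon
      simp only [Complex.sub_re, Complex.one_re, Complex.div_ofReal_re, Complex.sub_im,
        Complex.one_im, Complex.div_ofReal_im, zero_sub, neg_eq_zero, div_eq_zero_iff,
        hρ.ne', or_false] at hre him0
      refine hray ⟨z.re, ?_, Complex.ext (by simp) (by simpa using him0)⟩
      rwa [sub_nonpos, one_le_div hρ] at hre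
    have hg0 : g z ≠ 0 := fun h => by simp [h] at hgz
    have hlog := (Complex.log_mul_eq_add_log_iff (Complex.slitPlane_ne_zero hw) hg0).2
      (Complex.arg_add_arg_mem_Ioc_of_im_mul hw hgz hkz (him z))
    have hsqrt : ((1 - z / ρ) * g z) ^ (1 / 2 : ℂ)
        = (1 - z / (ρ : ℂ)) ^ (1 / 2 : ℂ) * (g z) ^ (1 / 2 : ℂ) := by
      rw [Complex.cpow_def_of_ne_zero (mul_ne_zero (Complex.slitPlane_ne_zero hw) hg0),
        Complex.cpow_def_of_ne_zero (Complex.slitPlane_ne_zero hw),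
        Complex.cpow_def_of_ne_zero hg0, hlog, add_mul, Complex.exp_add]
    simp only [u₁]
    rw [hfactor, hsqrt]
    ring
end

section
/- Fix positive reals p₋₁, p₀, p₁, let P(u) = p₋₁u⁻¹ + p₀ + p₁u, τ = √(p₋₁/p₁), ρ = 1/(p₀ + 2√(p₋₁p₁)), C = √(2P(τ)/P″(τ)) with P″(τ) = 2p₋₁/τ³. Let b_n denote the total weight of Motzkin bridges of length n. Then the series B(z) = Σ_{n≥0} b_n zⁿ converges for every real z with 0 ≤ z < ρ, and lim_{z→ρ⁻} √(1 − z/ρ) · B(z) = C/(2τ). -/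
open scoped BigOperators Classical

/-- Value of a step encoded by `Fin 3`: `0 ↦ -1`, `1 ↦ 0`, `2 ↦ +1`. -/
def stepVal (s : Fin 3) : ℤ := (s : ℤ) - 1

/-- Weight of a single step: `p₋₁` for `-1`, `p₀` for `0`, `p₁` for `+1`. -/
def stepWeight (pm p0 p1 : ℝ) (s : Fin 3) : ℝ :=
  if s = 0 then pm else if s = 1 then p0 else p1

/-- Weight of a Motzkin walk (product of its step weights). -/
def walkWeight (pm p0 p1 : ℝ) {n : ℕ} (w : Fin n → Fin 3) : ℝ :=
  ∏ i, stepWeight pm p0 p1 (w i)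

/-- Partial sum `ω_j` of the walk `w`. -/
def psum {n : ℕ} (w : Fin n → Fin 3) (j : ℕ) : ℤ :=
  ∑ i ∈ Finset.univ.filter (fun i : Fin n => (i : ℕ) < j), stepVal (w i)

/-- Total weight of Motzkin bridges of length `n`. -/
noncomputable def bridgeW (pm p0 p1 : ℝ) (n : ℕ) : ℝ :=
  ∑ w ∈ Finset.univ.filter (fun w : Fin n → Fin 3 => psum w n = 0),
    walkWeight pm p0 p1 w

/-- Number of returns to zero of a walk of length `n`. -/
def retZero {n : ℕ} (w : Fin n → Fin 3) : ℕ :=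
  ((Finset.Icc 1 n).filter (fun j => psum w j = 0)).card

/-- Total weight of walks of length `n` with exactly `k` returns to zero. -/
noncomputable def walkRetW (pm p0 p1 : ℝ) (n k : ℕ) : ℝ :=
  ∑ w ∈ Finset.univ.filter (fun w : Fin n → Fin 3 => retZero w = k),
    walkWeight pm p0 p1 w

/-- Number of sign changes of a walk of length `n`. -/
def signChanges {n : ℕ} (w : Fin n → Fin 3) : ℕ :=
  (((Finset.range (n+1)) ×ˢ (Finset.range (n+1))).filter
    (fun p => p.1 < p.2 ∧ psum w p.1 * psum w p.2 < 0 ∧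
      ∀ l ∈ Finset.Ioo p.1 p.2, psum w l = 0)).card

/-- Total weight of bridges of length `n` with exactly `k` sign changes. -/
noncomputable def bridgeSignW (pm p0 p1 : ℝ) (n k : ℕ) : ℝ :=
  ∑ w ∈ Finset.univ.filter
      (fun w : Fin n → Fin 3 => psum w n = 0 ∧ signChanges w = k),
    walkWeight pm p0 p1 w

/-- Total weight of positive excursions of length `n`. -/
noncomputable def posExcW (pm p0 p1 : ℝ) (n : ℕ) : ℝ :=
  ∑ w ∈ Finset.univ.filter
      (fun w : Fin n → Fin 3 => psum w n = 0 ∧ ∀ j ∈ Finset.range (n+1), 0 ≤ psum w j),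
    walkWeight pm p0 p1 w

/-- Total weight of negative excursions of length `n`. -/
noncomputable def negExcW (pm p0 p1 : ℝ) (n : ℕ) : ℝ :=
  ∑ w ∈ Finset.univ.filter
      (fun w : Fin n → Fin 3 => psum w n = 0 ∧ ∀ j ∈ Finset.range (n+1), psum w j ≤ 0),
    walkWeight pm p0 p1 w

/-- A positive bridge: a bridge whose last nonzero partial sum is positive. -/
def IsPosBridge {n : ℕ} (w : Fin n → Fin 3) : Prop :=
  psum w n = 0 ∧ ∃ j ∈ Finset.range (n+1),
    0 < psum w j ∧ ∀ l ∈ Finset.Ioc j n, psum w l = 0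

/-- A negative bridge: a bridge whose last nonzero partial sum is negative. -/
def IsNegBridge {n : ℕ} (w : Fin n → Fin 3) : Prop :=
  psum w n = 0 ∧ ∃ j ∈ Finset.range (n+1),
    psum w j < 0 ∧ ∀ l ∈ Finset.Ioc j n, psum w l = 0

instance {n : ℕ} (w : Fin n → Fin 3) : Decidable (IsPosBridge w) := by
  unfold IsPosBridge; infer_instance

instance {n : ℕ} (w : Fin n → Fin 3) : Decidable (IsNegBridge w) := by
  unfold IsNegBridge; infer_instance

/-- Total weight of positive bridges of length `n` with `k` sign changes. -/
noncomputable def posBridgeSignW (pm p0 p1 : ℝ) (n k : ℕ) : ℝ :=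
  ∑ w ∈ Finset.univ.filter
      (fun w : Fin n → Fin 3 => IsPosBridge w ∧ signChanges w = k),
    walkWeight pm p0 p1 w

/-- Total weight of negative bridges of length `n` with `k` sign changes. -/
noncomputable def negBridgeSignW (pm p0 p1 : ℝ) (n k : ℕ) : ℝ :=
  ∑ w ∈ Finset.univ.filter
      (fun w : Fin n → Fin 3 => IsNegBridge w ∧ signChanges w = k),
    walkWeight pm p0 p1 w

/-- Total weight of walks of length `n` with `k` sign changes. -/
noncomputable def walkSignW (pm p0 p1 : ℝ) (n k : ℕ) : ℝ :=
  ∑ w ∈ Finset.univ.filter (fun w : Fin n → Fin 3 => signChanges w = k),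
    walkWeight pm p0 p1 w

/-- Height of a walk of length `n` (as a natural number; it is `max_j ω_j ≥ 0`). -/
def height {n : ℕ} (w : Fin n → Fin 3) : ℕ :=
  (Finset.range (n+1)).sup (fun j => (psum w j).toNat)

/-- Total weight of walks of length `n` of height exactly `h`. -/
noncomputable def heightW (pm p0 p1 : ℝ) (n h : ℕ) : ℝ :=
  ∑ w ∈ Finset.univ.filter (fun w : Fin n → Fin 3 => height w = h),
    walkWeight pm p0 p1 w

/-- Total weight of walks of length `n`, each weighted further by `h` at its endpoint. -/
noncomputable def endpointSum (pm p0 p1 : ℝ) (n : ℕ) (h : ℤ → ℝ) : ℝ :=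
  ∑ w : Fin n → Fin 3, walkWeight pm p0 p1 w * h (∑ i, stepVal (w i))

/-- The one-step transfer operator of the walk. -/
def stepOp (pm p0 p1 : ℝ) (h : ℤ → ℝ) (k : ℤ) : ℝ :=
  pm * h (k - 1) + p0 * h k + p1 * h (k + 1)

lemma psum_length {n : ℕ} (w : Fin n → Fin 3) : psum w n = ∑ i, stepVal (w i) := by
  simp [psum]

lemma bridgeW_eq_endpointSum (pm p0 p1 : ℝ) (n : ℕ) :
    bridgeW pm p0 p1 n = endpointSum pm p0 p1 n (fun k => if k = 0 then 1 else 0) := by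
  simp only [bridgeW, endpointSum, psum_length, Finset.sum_filter, mul_ite, mul_one, mul_zero]

lemma endpointSum_zero (pm p0 p1 : ℝ) (h : ℤ → ℝ) : endpointSum pm p0 p1 0 h = h 0 := by
  simp [endpointSum, walkWeight]

lemma endpointSum_succ (pm p0 p1 : ℝ) (n : ℕ) (h : ℤ → ℝ) :
    endpointSum pm p0 p1 (n + 1) h = endpointSum pm p0 p1 n (stepOp pm p0 p1 h) := by
  unfold endpointSum
  rw [← (Fin.consEquiv (fun _ : Fin (n + 1) => Fin 3)).sum_comp, Fintype.sum_prod_type_right]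
  refine Finset.sum_congr rfl fun w _ => ?_
  rw [Fin.sum_univ_three]
  simp only [Fin.consEquiv, Equiv.coe_fn_mk, walkWeight, Fin.prod_univ_succ, Fin.sum_univ_succ,
    Fin.cons_zero, Fin.cons_succ, stepOp]
  set S := ∑ i, stepVal (w i)
  have h₀ : stepVal 0 + S = S - 1 := by simp [stepVal]; ring
  have h₁ : stepVal 1 + S = S := by simp [stepVal]
  have h₂ : stepVal 2 + S = S + 1 := by simp [stepVal]; ring
  have e₀ : stepWeight pm p0 p1 0 = pm := by simp [stepWeight]
  have e₁ : stepWeight pm p0 p1 1 = p0 := by simp [stepWeight]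
  have e₂ : stepWeight pm p0 p1 2 = p1 := by simp [stepWeight]
  rw [h₀, h₁, h₂, e₀, e₁, e₂]
  ring

lemma stepWeight_nonneg {pm p0 p1 : ℝ} (hpm : 0 ≤ pm) (hp0 : 0 ≤ p0) (hp1 : 0 ≤ p1)
    (s : Fin 3) : 0 ≤ stepWeight pm p0 p1 s := by
  unfold stepWeight
  split_ifs <;> assumption

lemma walkWeight_nonneg {pm p0 p1 : ℝ} (hpm : 0 ≤ pm) (hp0 : 0 ≤ p0) (hp1 : 0 ≤ p1)
    {n : ℕ} (w : Fin n → Fin 3) : 0 ≤ walkWeight pm p0 p1 w :=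
  Finset.prod_nonneg fun _ _ => stepWeight_nonneg hpm hp0 hp1 _

lemma endpointSum_mono {pm p0 p1 : ℝ} (hpm : 0 ≤ pm) (hp0 : 0 ≤ p0) (hp1 : 0 ≤ p1)
    (n : ℕ) {g h : ℤ → ℝ} (hgh : ∀ k, g k ≤ h k) :
    endpointSum pm p0 p1 n g ≤ endpointSum pm p0 p1 n h :=
  Finset.sum_le_sum fun w _ =>
    mul_le_mul_of_nonneg_left (hgh _) (walkWeight_nonneg hpm hp0 hp1 w)

lemma endpointSum_add_mul (pm p0 p1 : ℝ) (n : ℕ) (f g : ℤ → ℝ) (z : ℝ) :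
    endpointSum pm p0 p1 n (fun k => f k + z * g k) =
      endpointSum pm p0 p1 n f + z * endpointSum pm p0 p1 n g := by
  simp only [endpointSum, Finset.mul_sum, ← Finset.sum_add_distrib]
  exact Finset.sum_congr rfl fun w _ => by ring

lemma endpointSum_const_mul (pm p0 p1 : ℝ) (n : ℕ) (c : ℝ) (h : ℤ → ℝ) :
    endpointSum pm p0 p1 n (fun k => c * h k) = c * endpointSum pm p0 p1 n h := by
  simp only [endpointSum, Finset.mul_sum]
  exact Finset.sum_congr rfl fun w _ => by ring

lemma endpointSum_zpow (pm p0 p1 : ℝ) {t : ℝ} (ht : t ≠ 0) (n : ℕ) :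
    endpointSum pm p0 p1 n (fun k => t ^ k) = (pm * t⁻¹ + p0 + p1 * t) ^ n := by
  induction n with
  | zero => simp [endpointSum_zero]
  | succ n ih =>
    have hstep : stepOp pm p0 p1 (fun k => t ^ k) =
        fun k => (pm * t⁻¹ + p0 + p1 * t) * t ^ k := by
      funext k
      simp only [stepOp, zpow_sub_one₀ ht, zpow_add_one₀ ht]
      ring
    rw [endpointSum_succ, hstep, endpointSum_const_mul, ih, pow_succ']

lemma bridgeW_nonneg {pm p0 p1 : ℝ} (hpm : 0 ≤ pm) (hp0 : 0 ≤ p0) (hp1 : 0 ≤ p1) (n : ℕ) :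
    0 ≤ bridgeW pm p0 p1 n :=
  Finset.sum_nonneg fun w _ => walkWeight_nonneg hpm hp0 hp1 w

/-- A nonnegative solution `H` of `H = δ₀ + z • stepOp H` dominated by a multiple of `k ↦ t ^ k`
computes the bridge generating function at every `z` with `z * P(t) < 1`. -/
lemma hasSum_bridgeW_of_fixedPoint {pm p0 p1 t z c : ℝ} (hpm : 0 ≤ pm) (hp0 : 0 ≤ p0)
    (hp1 : 0 ≤ p1) (ht : 0 < t) (hz : 0 ≤ z) (hzt : z * (pm * t⁻¹ + p0 + p1 * t) < 1)
    {H : ℤ → ℝ} (hH : ∀ k, 0 ≤ H k) (hHc : ∀ k, H k ≤ c * t ^ k)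
    (hfix : ∀ k, H k = (if k = 0 then 1 else 0) + z * stepOp pm p0 p1 H k) :
    HasSum (fun n => bridgeW pm p0 p1 n * z ^ n) (H 0) := by
  have hrec (n : ℕ) : endpointSum pm p0 p1 n H =
      bridgeW pm p0 p1 n + z * endpointSum pm p0 p1 (n + 1) H := by
    rw [endpointSum_succ, bridgeW_eq_endpointSum, ← endpointSum_add_mul]
    exact congrArg _ (funext hfix)
  have hpartial (N : ℕ) : ∑ n ∈ Finset.range N, bridgeW pm p0 p1 n * z ^ n =
      H 0 - z ^ N * endpointSum pm p0 p1 N H := by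
    induction N with
    | zero => simp [endpointSum_zero]
    | succ N ih =>
      rw [Finset.sum_range_succ, ih, hrec N]
      ring
  rw [hasSum_iff_tendsto_nat_of_nonneg
    fun n => mul_nonneg (bridgeW_nonneg hpm hp0 hp1 n) (pow_nonneg hz n)]
  simp only [hpartial]
  have hP : 0 ≤ z * (pm * t⁻¹ + p0 + p1 * t) := by positivity
  have hlim : Filter.Tendsto (fun N : ℕ => c * (z * (pm * t⁻¹ + p0 + p1 * t)) ^ N)
      Filter.atTop (nhds 0) := by
    simpa using (tendsto_pow_atTop_nhds_zero_of_lt_one hP hzt).const_mul c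
  have hrem : Filter.Tendsto (fun N : ℕ => z ^ N * endpointSum pm p0 p1 N H)
      Filter.atTop (nhds 0) := by
    refine squeeze_zero (fun N => mul_nonneg (pow_nonneg hz N) ?_) (fun N => ?_) hlim
    · exact Finset.sum_nonneg fun w _ => mul_nonneg (walkWeight_nonneg hpm hp0 hp1 w) (hH _)
    · calc z ^ N * endpointSum pm p0 p1 N H
          ≤ z ^ N * endpointSum pm p0 p1 N (fun k => c * t ^ k) :=
            mul_le_mul_of_nonneg_left (endpointSum_mono hpm hp0 hp1 N hHc) (pow_nonneg hz N)
        _ = c * (z * (pm * t⁻¹ + p0 + p1 * t)) ^ N := by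
            rw [endpointSum_const_mul, endpointSum_zpow _ _ _ ht.ne', mul_pow]
            ring
  simpa using hrem.const_sub (H 0)

/-- Closed form of the bridge generating function, with `t` the saddle point of `P`
and `s = pm / t = p1 * t`. -/
lemma hasSum_bridgeW {pm p0 p1 t s z : ℝ} (hp0 : 0 ≤ p0) (ht : 0 < t) (hs : 0 ≤ s)
    (hpm : pm = s * t) (hp1 : p1 = s * t⁻¹) (hz : 0 ≤ z) (hz1 : z * (p0 + 2 * s) < 1) :
    HasSum (fun n => bridgeW pm p0 p1 n * z ^ n)
      (1 / √((1 - z * (p0 + 2 * s)) * (1 - z * (p0 - 2 * s)))) := by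
  have ht' := ht.ne'
  have hzs : 0 ≤ z * s := mul_nonneg hz hs
  have hΔ : 0 < (1 - z * (p0 + 2 * s)) * (1 - z * (p0 - 2 * s)) :=
    mul_pos (by linarith) (by linarith)
  set D := √((1 - z * (p0 + 2 * s)) * (1 - z * (p0 - 2 * s)))
  have hDpos : 0 < D := Real.sqrt_pos.2 hΔ
  have hDsq : D ^ 2 = (1 - z * (p0 + 2 * s)) * (1 - z * (p0 - 2 * s)) := Real.sq_sqrt hΔ.le
  have hm : 0 < 1 - p0 * z + D := by linarith
  obtain ⟨r, hr⟩ : ∃ r, r = 2 * z * s / (1 - p0 * z + D) := ⟨_, rfl⟩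
  have hr0 : 0 ≤ r := by rw [hr]; positivity
  have hr1 : r ≤ 1 := by rw [hr, div_le_one hm]; linarith
  have hmr : r * (1 - p0 * z + D) = 2 * z * s := by rw [hr, div_mul_cancel₀ _ hm.ne']
  have hqr : 1 - p0 * z - 2 * z * s * r = D := by
    have : (1 - p0 * z + D) * (1 - p0 * z - 2 * z * s * r - D) = 0 := by
      linear_combination (-2 * z * s) * hmr - hDsq
    linarith [(mul_eq_zero.1 this).resolve_left hm.ne']
  have hchar : z * s * (1 + r ^ 2) = (1 - p0 * z) * r := by
    linear_combination (-1 / 2) * hmr - r / 2 * hqr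
  have hsolve := hasSum_bridgeW_of_fixedPoint (pm := pm) (p0 := p0) (p1 := p1) (t := t) (z := z)
    (c := 1 / D) (H := fun k => 1 / D * (r ^ k.natAbs * t ^ k))
    (by rw [hpm]; positivity) hp0 (by rw [hp1]; positivity) ht hz
    (by
      have : pm * t⁻¹ + p0 + p1 * t = p0 + 2 * s := by
        rw [hpm, hp1]
        field_simp
        ring
      rwa [this])
    (fun k => by positivity)
    (fun k => by
      refine mul_le_mul_of_nonneg_left ?_ (by positivity)
      exact mul_le_of_le_one_left (by positivity) (pow_le_one₀ hr0 hr1))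
    (fun k => by
      simp only [stepOp, zpow_sub_one₀ ht', zpow_add_one₀ ht']
      have hsym : r ^ k.natAbs = (if k = 0 then D else 0) +
          z * (s * r ^ (k - 1).natAbs + p0 * r ^ k.natAbs + s * r ^ (k + 1).natAbs) := by
        rcases lt_trichotomy k 0 with hk | hk | hk
        · obtain ⟨n, rfl⟩ : ∃ n : ℕ, k = -(n + 1) := ⟨(-k - 1).toNat, by omega⟩
          have e₁ : (-((n : ℤ) + 1) - 1).natAbs = n + 2 := by omega
          have e₂ : (-((n : ℤ) + 1)).natAbs = n + 1 := by omega
          have e₃ : (-((n : ℤ) + 1) + 1).natAbs = n := by omega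
          rw [if_neg hk.ne, e₁, e₂, e₃]
          linear_combination (-r ^ n) * hchar
        · subst hk
          simp
          linear_combination hqr
        · obtain ⟨n, rfl⟩ : ∃ n : ℕ, k = n + 1 := ⟨(k - 1).toNat, by omega⟩
          have e₁ : ((n : ℤ) + 1 - 1).natAbs = n := by omega
          have e₂ : ((n : ℤ) + 1).natAbs = n + 1 := by omega
          have e₃ : ((n : ℤ) + 1 + 1).natAbs = n + 2 := by omega
          rw [if_neg hk.ne', e₁, e₂, e₃]
          linear_combination (-r ^ n) * hchar
      have hdelta : (if k = 0 then (1 : ℝ) else 0) =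
          1 / D * ((if k = 0 then D else 0) * t ^ k) := by
        split_ifs with hk
        · subst hk
          simp [hDpos.ne']
        · simp
      rw [hdelta, hpm, hp1]
      field_simp
      linear_combination hsym)
  simpa using hsolve

/-- **Asymptotics of the bridge generating function**: `B(z) = Σ b_n zⁿ` converges
for `0 ≤ z < ρ` and `√(1-z/ρ)·B(z) → C/(2τ)` as `z → ρ⁻`. -/
theorem bridge_gf_singularity (pm p0 p1 : ℝ)
    (hpm : 0 < pm) (hp0 : 0 < p0) (hp1 : 0 < p1) :
    let τ : ℝ := Real.sqrt (pm / p1)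
    let Pτ : ℝ := pm * τ⁻¹ + p0 + p1 * τ
    let ρ : ℝ := 1 / (p0 + 2 * Real.sqrt (pm * p1))
    let C : ℝ := Real.sqrt (2 * Pτ / (2 * pm / τ ^ 3))
    let B : ℝ → ℝ := fun z => ∑' n : ℕ, bridgeW pm p0 p1 n * z ^ n
    (∀ z : ℝ, 0 ≤ z → z < ρ → Summable (fun n : ℕ => bridgeW pm p0 p1 n * z ^ n)) ∧
    Filter.Tendsto (fun z : ℝ => Real.sqrt (1 - z / ρ) * B z)
      (nhdsWithin ρ (Set.Iio ρ)) (nhds (C / (2 * τ))) := by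
  intro τ Pτ ρ C B
  have hτ : 0 < τ := Real.sqrt_pos.2 (div_pos hpm hp1)
  have hτsq : τ ^ 2 = pm / p1 := Real.sq_sqrt (div_pos hpm hp1).le
  obtain ⟨s, hs⟩ : ∃ s, s = √(pm * p1) := ⟨_, rfl⟩
  have hs0 : 0 < s := hs ▸ Real.sqrt_pos.2 (mul_pos hpm hp1)
  have hsτ : s = p1 * τ := by
    rw [hs, Real.sqrt_eq_iff_mul_self_eq_of_pos (by positivity)]
    field_simp at hτsq
    linear_combination p1 * hτsq
  have hpmτ : pm = s * τ := by
    rw [hsτ]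
    field_simp at hτsq
    linear_combination -hτsq
  have hp1τ : p1 = s * τ⁻¹ := by
    rw [hsτ]
    field_simp
  have hρ : ρ = 1 / (p0 + 2 * s) := by rw [hs]
  have hρpos : 0 < ρ := by rw [hρ]; positivity
  have hρmul : ρ * (p0 + 2 * s) = 1 := by rw [hρ]; field_simp
  have hdiv (z : ℝ) : z / ρ = z * (p0 + 2 * s) := by rw [hρ]; field_simp
  have hsum (z : ℝ) (hz : 0 ≤ z) (hzρ : z < ρ) :=
    hasSum_bridgeW hp0.le hτ hs0.le hpmτ hp1τ hz
      (by rw [← hρmul]; exact mul_lt_mul_of_pos_right hzρ (by positivity))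
  refine ⟨fun z hz hzρ => (hsum z hz hzρ).summable, ?_⟩
  have hgap : 1 - ρ * (p0 - 2 * s) = 4 * s * ρ := by linear_combination -hρmul
  have hlimit : C / (2 * τ) = 1 / √(1 - ρ * (p0 - 2 * s)) := by
    have hPτ : Pτ = 1 / ρ := by
      change pm * τ⁻¹ + p0 + p1 * τ = 1 / ρ
      rw [hρ, one_div_one_div, ← hsτ, hpmτ]
      field_simp
      ring
    have hC : C = √(2 * Pτ / (2 * pm / τ ^ 3)) := rfl
    have h2τ : 2 * τ = √((2 * τ) ^ 2) := (Real.sqrt_sq (by positivity)).symm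
    rw [hgap, hC, h2τ, ← Real.sqrt_div' _ (by positivity), ← Real.sqrt_one,
      ← Real.sqrt_div' _ (by positivity), hPτ, hpmτ]
    congr 1
    field_simp
    norm_num
  rw [hlimit]
  have hcont : Filter.Tendsto (fun z : ℝ => 1 / √(1 - z * (p0 - 2 * s)))
      (nhdsWithin ρ (Set.Iio ρ)) (nhds (1 / √(1 - ρ * (p0 - 2 * s)))) := by
    have hne : √(1 - ρ * (p0 - 2 * s)) ≠ 0 := by
      rw [hgap]
      positivity
    have : ContinuousAt (fun z : ℝ => 1 / √(1 - z * (p0 - 2 * s))) ρ :=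
      continuousAt_const.div (by fun_prop) hne
    exact this.tendsto.mono_left nhdsWithin_le_nhds
  refine hcont.congr' ?_
  filter_upwards [Ioo_mem_nhdsLT hρpos] with z hz
  have hlt : 0 < 1 - z * (p0 + 2 * s) := by
    rw [← hρmul, ← sub_mul]
    exact mul_pos (sub_pos.2 hz.2) (by positivity)
  have hB : B z = _ := (hsum z hz.1.le hz.2).tsum_eq
  have hsqrt : √(1 - z * (p0 + 2 * s)) ≠ 0 := (Real.sqrt_pos.2 hlt).ne'
  rw [hB, hdiv, Real.sqrt_mul hlt.le, ← mul_div_assoc, mul_one, div_mul_eq_div_div,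
    div_self hsqrt]
end

section
/- Fix positive reals p₋₁, p₀, p₁ and let P(1) = p₋₁ + p₀ + p₁. Let w_{n,k} denote the total weight of Motzkin walks of length n having exactly k returns to zero, and let b_n denote the total weight of bridges of length n with B(z) = Σ_{n≥0} b_n zⁿ. Then for all real z with 0 < z < 1/P(1) and all real u with 0 ≤ u ≤ 1, the double series converges and Σ_{n≥0} zⁿ (Σ_{k≥0} w_{n,k} u^k) = W(z)/(u + (1−u)·B(z)), where W(z) = 1/(1 − zP(1)). -/
open scoped BigOperators Classical

/-- Generating polynomial, evaluated at `u`, of the number of returns to zero of walks of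
length `n`. -/
noncomputable def returnPoly (pm p0 p1 u : ℝ) (n : ℕ) : ℝ :=
  ∑ w : Fin n → Fin 3, walkWeight pm p0 p1 w * u ^ retZero w

theorem Finset.pow_card_add_one_sub_mul_sum (u : ℝ) (s : Finset ℕ) :
    u ^ s.card + (1 - u) * ∑ j ∈ s, u ^ (s.filter (fun i => j < i)).card = 1 := by
  induction s using Finset.induction_on_min with
  | empty => simp
  | insert a s ha ih =>
    have hnot : a ∉ s := fun h => lt_irrefl a (ha a h)
    have hfirst : (insert a s).filter (fun i => a < i) = s := by
      rw [Finset.filter_insert, if_neg (lt_irrefl a), Finset.filter_true_of_mem ha]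
    have hrest : ∀ j ∈ s, u ^ ((insert a s).filter (fun i => j < i)).card =
        u ^ (s.filter (fun i => j < i)).card := fun j hj => by
      rw [Finset.filter_insert, if_neg (ha j hj).not_gt]
    rw [Finset.sum_insert hnot, hfirst, Finset.sum_congr rfl hrest,
      Finset.card_insert_of_notMem hnot, pow_succ]
    linarith

theorem psum_zero {n : ℕ} (w : Fin n → Fin 3) : psum w 0 = 0 := by
  simp [psum]

theorem psum_append_left {j m : ℕ} (a : Fin j → Fin 3) (b : Fin m → Fin 3) :
    psum (Fin.append a b) j = psum a j := by
  simp [psum, Finset.sum_filter, Fin.sum_univ_add]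

theorem psum_append_right {j m : ℕ} (a : Fin j → Fin 3) (b : Fin m → Fin 3) (i : ℕ) :
    psum (Fin.append a b) (j + i) = psum a j + psum b i := by
  have h (x : Fin j) : (x : ℕ) < j + i := by omega
  simp [psum, Finset.sum_filter, Fin.sum_univ_add, h]

theorem walkWeight_append (pm p0 p1 : ℝ) {j m : ℕ} (a : Fin j → Fin 3) (b : Fin m → Fin 3) :
    walkWeight pm p0 p1 (Fin.append a b) = walkWeight pm p0 p1 a * walkWeight pm p0 p1 b := by
  simp [walkWeight, Fin.prod_univ_add]

/-- The times in `{0, …, n}` at which a walk of length `n` is at zero. -/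
def zeroTimes {n : ℕ} (w : Fin n → Fin 3) : Finset ℕ :=
  (Finset.range (n + 1)).filter (fun j => psum w j = 0)

theorem card_zeroTimes {n : ℕ} (w : Fin n → Fin 3) : (zeroTimes w).card = retZero w + 1 := by
  have h : zeroTimes w = insert 0 ((Finset.Icc 1 n).filter (fun j => psum w j = 0)) := by
    ext i
    rcases Nat.eq_zero_or_pos i with rfl | hi
    · simp [zeroTimes, psum_zero]
    · simp only [zeroTimes, Finset.mem_filter, Finset.mem_range, Finset.mem_insert,
        Finset.mem_Icc]
      grind
  rw [h, Finset.card_insert_of_notMem (by simp), retZero]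

theorem card_zeroTimes_append {j m : ℕ} (a : Fin j → Fin 3) (b : Fin m → Fin 3)
    (ha : psum a j = 0) :
    ((zeroTimes (Fin.append a b)).filter (fun i => j < i)).card = retZero b := by
  have h : (zeroTimes (Fin.append a b)).filter (fun i => j < i) =
      ((Finset.Icc 1 m).filter (fun i => psum b i = 0)).map (addLeftEmbedding j) := by
    ext i
    simp only [zeroTimes, Finset.mem_filter, Finset.mem_range, Finset.mem_map, Finset.mem_Icc,
      addLeftEmbedding_apply]
    constructor
    · rintro ⟨⟨hi, h0⟩, hj⟩
      obtain ⟨k, rfl⟩ := Nat.exists_eq_add_of_lt hj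
      rw [add_assoc, psum_append_right, ha, zero_add] at h0
      exact ⟨k + 1, ⟨⟨by omega, by omega⟩, h0⟩, by omega⟩
    · rintro ⟨k, ⟨⟨h1, hm⟩, h0⟩, rfl⟩
      rw [psum_append_right, ha, h0]
      exact ⟨⟨by omega, rfl⟩, by omega⟩
  rw [h, Finset.card_map, retZero]

theorem sum_walks_through_zero (pm p0 p1 u : ℝ) {n j : ℕ} (hj : j ≤ n) :
    ∑ w : Fin n → Fin 3, (if psum w j = 0 then
      walkWeight pm p0 p1 w * u ^ ((zeroTimes w).filter (fun i => j < i)).card else 0) =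
    bridgeW pm p0 p1 j * returnPoly pm p0 p1 u (n - j) := by
  obtain ⟨m, rfl⟩ := Nat.exists_eq_add_of_le hj
  rw [Nat.add_sub_cancel_left, ← (Fin.appendEquiv j m).sum_comp, Fintype.sum_prod_type, bridgeW,
    returnPoly, Finset.sum_mul_sum, Finset.sum_filter]
  refine Finset.sum_congr rfl fun a _ => ?_
  simp only [Fin.appendEquiv, Equiv.coe_fn_mk, psum_append_left]
  split_ifs with ha
  · refine Finset.sum_congr rfl fun b _ => ?_
    rw [walkWeight_append, card_zeroTimes_append a b ha, mul_assoc]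
  · simp

theorem sum_walkWeight (pm p0 p1 : ℝ) (n : ℕ) :
    ∑ w : Fin n → Fin 3, walkWeight pm p0 p1 w = (pm + p0 + p1) ^ n := by
  simp only [walkWeight]
  rw [← Fintype.sum_pow]
  simp [Fin.sum_univ_three, stepWeight]

theorem returnPoly_recurrence (pm p0 p1 u : ℝ) (n : ℕ) :
    u * returnPoly pm p0 p1 u n + (1 - u) * ∑ j ∈ Finset.range (n + 1),
      bridgeW pm p0 p1 j * returnPoly pm p0 p1 u (n - j) = (pm + p0 + p1) ^ n := by
  have hsplit : ∑ j ∈ Finset.range (n + 1),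
      bridgeW pm p0 p1 j * returnPoly pm p0 p1 u (n - j) =
      ∑ w : Fin n → Fin 3, walkWeight pm p0 p1 w *
        ∑ j ∈ zeroTimes w, u ^ ((zeroTimes w).filter (fun i => j < i)).card := by
    rw [Finset.sum_congr rfl fun j hj => (sum_walks_through_zero pm p0 p1 u
      (Nat.lt_succ_iff.mp (Finset.mem_range.mp hj))).symm, Finset.sum_comm]
    refine Finset.sum_congr rfl fun w _ => ?_
    rw [← Finset.sum_filter, Finset.mul_sum]
    rfl
  rw [hsplit, returnPoly, Finset.mul_sum, Finset.mul_sum, ← Finset.sum_add_distrib,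
    ← sum_walkWeight]
  refine Finset.sum_congr rfl fun w _ => ?_
  have h := Finset.pow_card_add_one_sub_mul_sum u (zeroTimes w)
  rw [card_zeroTimes, pow_succ] at h
  linear_combination walkWeight pm p0 p1 w * h

theorem walkWeight_pos {pm p0 p1 : ℝ} (hpm : 0 < pm) (hp0 : 0 < p0) (hp1 : 0 < p1) {n : ℕ}
    (w : Fin n → Fin 3) : 0 < walkWeight pm p0 p1 w := by
  refine Finset.prod_pos fun i _ => ?_
  unfold stepWeight
  split_ifs <;> assumption

theorem hasSum_walkRetW (pm p0 p1 u : ℝ) (n : ℕ) :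
    HasSum (fun k => walkRetW pm p0 p1 n k * u ^ k) (returnPoly pm p0 p1 u n) := by
  have hterm (k : ℕ) : walkRetW pm p0 p1 n k * u ^ k = ∑ w : Fin n → Fin 3,
      if k = retZero w then walkWeight pm p0 p1 w * u ^ retZero w else 0 := by
    rw [walkRetW, Finset.sum_mul, Finset.sum_filter]
    refine Finset.sum_congr rfl fun w _ => ?_
    by_cases h : retZero w = k
    · simp [h]
    · simp [h, Ne.symm h]
  simp only [hterm]
  exact hasSum_sum fun w _ => hasSum_ite_eq (retZero w) _

/-- **Bivariate generating function for returns to zero of Motzkin walks**: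
`W(z,u) = W(z)/(u + (1-u)B(z))`. -/
theorem returns_to_zero_gf (pm p0 p1 : ℝ)
    (hpm : 0 < pm) (hp0 : 0 < p0) (hp1 : 0 < p1) :
    let P1 : ℝ := pm + p0 + p1
    let B : ℝ → ℝ := fun z => ∑' n : ℕ, bridgeW pm p0 p1 n * z ^ n
    let W : ℝ → ℝ := fun z => 1 / (1 - z * P1)
    ∀ z : ℝ, 0 < z → z < 1 / P1 → ∀ u : ℝ, 0 ≤ u → u ≤ 1 →
      Summable (fun p : ℕ × ℕ => walkRetW pm p0 p1 p.1 p.2 * z ^ p.1 * u ^ p.2) ∧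
      (∑' n : ℕ, z ^ n * ∑' k : ℕ, walkRetW pm p0 p1 n k * u ^ k) =
        W z / (u + (1 - u) * B z) := by
  intro P1 B W z hz hzP u hu0 hu1
  have hP : 0 < P1 := by positivity
  have hr0 : 0 ≤ P1 * z := by positivity
  have hr1 : P1 * z < 1 := by rwa [lt_div_iff₀ hP, mul_comm] at hzP
  have hgeom : Summable fun n : ℕ => (P1 * z) ^ n := summable_geometric_of_lt_one hr0 hr1
  have hweight {n : ℕ} (w : Fin n → Fin 3) : 0 < walkWeight pm p0 p1 w :=
    walkWeight_pos hpm hp0 hp1 w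
  have hF0 (n : ℕ) : 0 ≤ returnPoly pm p0 p1 u n :=
    Finset.sum_nonneg fun w _ => mul_nonneg (hweight w).le (pow_nonneg hu0 _)
  have hF1 (n : ℕ) : returnPoly pm p0 p1 u n ≤ P1 ^ n := by
    rw [← sum_walkWeight]
    exact Finset.sum_le_sum fun w _ =>
      mul_le_of_le_one_right (hweight w).le (pow_le_one₀ hu0 hu1)
  have hb0 (n : ℕ) : 0 ≤ bridgeW pm p0 p1 n := Finset.sum_nonneg fun w _ => (hweight w).le
  have hb1 (n : ℕ) : bridgeW pm p0 p1 n ≤ P1 ^ n := by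
    rw [← sum_walkWeight]
    exact Finset.sum_le_sum_of_subset_of_nonneg (Finset.filter_subset _ _)
      fun w _ _ => (hweight w).le
  have hFs : Summable fun n => returnPoly pm p0 p1 u n * z ^ n :=
    hgeom.of_nonneg_of_le (fun n => mul_nonneg (hF0 n) (by positivity)) fun n => by
      rw [mul_pow]
      exact mul_le_mul_of_nonneg_right (hF1 n) (by positivity)
  have hbs : Summable fun n => bridgeW pm p0 p1 n * z ^ n :=
    hgeom.of_nonneg_of_le (fun n => mul_nonneg (hb0 n) (by positivity)) fun n => by
      rw [mul_pow]
      exact mul_le_mul_of_nonneg_right (hb1 n) (by positivity)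
  have hrow (n : ℕ) : HasSum (fun k => walkRetW pm p0 p1 n k * z ^ n * u ^ k)
      (returnPoly pm p0 p1 u n * z ^ n) := by
    simpa only [mul_right_comm] using (hasSum_walkRetW pm p0 p1 u n).mul_right (z ^ n)
  refine ⟨?_, ?_⟩
  · refine (summable_prod_of_nonneg fun p => ?_).2 ⟨fun n => (hrow n).summable, ?_⟩
    · have : 0 ≤ walkRetW pm p0 p1 p.1 p.2 := Finset.sum_nonneg fun w _ => (hweight w).le
      exact mul_nonneg (mul_nonneg this (by positivity)) (by positivity)
    · simpa only [fun n => (hrow n).tsum_eq] using hFs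
  have hBpos : 0 < B z := by
    refine hbs.tsum_pos (fun n => mul_nonneg (hb0 n) (by positivity)) 0 ?_
    simp [bridgeW, psum, walkWeight]
  have hden : 0 < u + (1 - u) * B z := by
    rcases hu1.lt_or_eq with h | rfl
    · have := mul_pos (sub_pos.2 h) hBpos
      linarith
    · simp
  have hcauchy : B z * ∑' n, returnPoly pm p0 p1 u n * z ^ n =
      ∑' n, ∑ j ∈ Finset.range (n + 1),
        bridgeW pm p0 p1 j * z ^ j * (returnPoly pm p0 p1 u (n - j) * z ^ (n - j)) :=
    tsum_mul_tsum_eq_tsum_sum_range_of_summable_norm hbs.norm hFs.norm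
  have hcauchys : Summable fun n => ∑ j ∈ Finset.range (n + 1),
      bridgeW pm p0 p1 j * z ^ j * (returnPoly pm p0 p1 u (n - j) * z ^ (n - j)) :=
    (summable_norm_sum_mul_range_of_summable_norm hbs.norm hFs.norm).of_norm
  have hkey : (u + (1 - u) * B z) * ∑' n, returnPoly pm p0 p1 u n * z ^ n = W z := by
    rw [add_mul, mul_assoc, hcauchy, ← tsum_mul_left, ← tsum_mul_left,
      ← (hFs.mul_left u).tsum_add (hcauchys.mul_left (1 - u))]
    simp only [W, one_div]
    rw [mul_comm z P1, ← tsum_geometric_of_lt_one hr0 hr1]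
    refine tsum_congr fun n => ?_
    rw [mul_pow, ← returnPoly_recurrence pm p0 p1 u n, add_mul, mul_assoc, mul_assoc (1 - u),
      Finset.sum_mul]
    congr 2
    refine Finset.sum_congr rfl fun j hj => ?_
    rw [← Nat.add_sub_cancel' (Nat.lt_succ_iff.mp (Finset.mem_range.mp hj)), pow_add]
    simp only [Nat.add_sub_cancel_left]
    ring
  rw [eq_div_iff hden.ne', ← hkey, mul_comm]
  congr 1
  refine tsum_congr fun n => ?_
  rw [(hasSum_walkRetW pm p0 p1 u n).tsum_eq, mul_comm]
end
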